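/- Let n≥1 and let η=(η_1,…,η_n)∈ℕ^n be a composition, and let Φη := (η_2,…,η_n,η_1+1). Then, as identities of polynomials in ℤ[q,t]: d'_{Φη}(q,t) = (1 − q^{η_1+1} t^{n−1−l'_η(1)})·d'_η(q,t) and e'_{Φη}(q,t) = (1 − q^{η_1+1} t^{n−1−l'_η(1)})·e'_η(q,t), where l'_η(1) = #{k>1 : η_k>η_1}. -/

import Mathlib

/- STATEMENT 1: For a composition η ∈ ℕ^n and Φη := (η_2,…,η_n,η_1+1), in ℤ[q,t]:
   d'_{Φη} = (1 − q^{η_1+1} t^{n−1−l'_η(1)})·d'_η  and  e'_{Φη} = (1 − q^{η_1+1} t^{n−1−l'_η(1)})·e'_η. -/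

open Finset

namespace Stmt1

variable {R : Type*} [CommRing R]

/-- leg colength l'_η(i) -/
def legCo (n : ℕ) (η : Fin n → ℕ) (i : Fin n) : ℕ :=
  (univ.filter fun k => k < i ∧ η i ≤ η k).card +
  (univ.filter fun k => i < k ∧ η i < η k).card

/-- leg length l(s) of the node s = (i,j) -/
def leg (n : ℕ) (η : Fin n → ℕ) (i : Fin n) (j : ℕ) : ℕ :=
  (univ.filter fun k => i < k ∧ j ≤ η k ∧ η k ≤ η i).card +
  (univ.filter fun k => k < i ∧ j ≤ η k + 1 ∧ η k + 1 ≤ η i).card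

/-- d'_η(q,t) = ∏_s (1 − q^{a(s)+1} t^{l(s)}) -/
def dP' (n : ℕ) (η : Fin n → ℕ) (q t : R) : R :=
  ∏ i : Fin n, ∏ j ∈ Finset.Icc 1 (η i), (1 - q ^ (η i - j + 1) * t ^ (leg n η i j))

/-- e'_η(q,t) = ∏_s (1 − q^{a'(s)+1} t^{n−1−l'(s)}) -/
def eP' (n : ℕ) (η : Fin n → ℕ) (q t : R) : R :=
  ∏ i : Fin n, ∏ j ∈ Finset.Icc 1 (η i), (1 - q ^ ((j - 1) + 1) * t ^ (n - 1 - legCo n η i))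

/-- Φη := (η_2,…,η_n,η_1+1) -/
def Phi (n : ℕ) (η : Fin n → ℕ) : Fin n → ℕ :=
  fun k => if h : (k : ℕ) + 1 < n then η ⟨(k : ℕ) + 1, h⟩ else η ⟨0, k.pos⟩ + 1

end Stmt1

open Stmt1 MvPolynomial


namespace Stmt1Aux

lemma Phi_castSucc (m : ℕ) (η : Fin (m+1) → ℕ) (k : Fin m) :
    Phi (m+1) η k.castSucc = η k.succ := by
  unfold Phi
  rw [dif_pos (by simp)]
  rfl

lemma Phi_last (m : ℕ) (η : Fin (m+1) → ℕ) :
    Phi (m+1) η (Fin.last m) = η 0 + 1 := by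
  unfold Phi
  rw [dif_neg (by simp)]
  rfl

lemma legCo_castSucc (m : ℕ) (η : Fin (m+1) → ℕ) (i : Fin m) :
    legCo (m+1) (Phi (m+1) η) i.castSucc = legCo (m+1) η i.succ := by
  simp only [legCo, Finset.card_filter]
  rw [Fin.sum_univ_castSucc, Fin.sum_univ_castSucc, Fin.sum_univ_succ, Fin.sum_univ_succ]
  simp [Phi_castSucc, Phi_last, Fin.castSucc_lt_last, Nat.lt_succ_iff, (Fin.le_last _).not_gt]
  omega

lemma legCo_last (m : ℕ) (η : Fin (m+1) → ℕ) :
    legCo (m+1) (Phi (m+1) η) (Fin.last m) = legCo (m+1) η 0 := by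
  simp only [legCo, Finset.card_filter]
  rw [Fin.sum_univ_castSucc, Fin.sum_univ_castSucc, Fin.sum_univ_succ, Fin.sum_univ_succ]
  simp [Phi_castSucc, Phi_last, Fin.castSucc_lt_last, Nat.succ_le_iff, (Fin.le_last _).not_gt]

lemma leg_castSucc (m : ℕ) (η : Fin (m+1) → ℕ) (i : Fin m) (j : ℕ) :
    leg (m+1) (Phi (m+1) η) i.castSucc j = leg (m+1) η i.succ j := by
  simp only [leg, Finset.card_filter]
  rw [Fin.sum_univ_castSucc, Fin.sum_univ_castSucc, Fin.sum_univ_succ, Fin.sum_univ_succ]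
  simp [Phi_castSucc, Phi_last, Fin.castSucc_lt_last, (Fin.le_last _).not_gt]
  omega

lemma leg_last (m : ℕ) (η : Fin (m+1) → ℕ) (j : ℕ) :
    leg (m+1) (Phi (m+1) η) (Fin.last m) (j+1) = leg (m+1) η 0 j := by
  simp only [leg, Finset.card_filter]
  rw [Fin.sum_univ_castSucc, Fin.sum_univ_castSucc, Fin.sum_univ_succ, Fin.sum_univ_succ]
  simp [Phi_castSucc, Phi_last, Fin.castSucc_lt_last, (Fin.le_last _).not_gt]

lemma leg_zero (m : ℕ) (η : Fin (m+1) → ℕ) :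
    leg (m+1) η 0 0 = m + 1 - 1 - legCo (m+1) η 0 := by
  have h : leg (m+1) η 0 0 + legCo (m+1) η 0 = m := by
    simp only [leg, legCo, Finset.card_filter]
    simp only [Fin.sum_univ_succ (n := m)]
    simp [-Finset.sum_boole]
    rw [← Finset.sum_add_distrib]
    trans ∑ _i : Fin m, 1
    · apply Finset.sum_congr rfl
      intro k _
      split_ifs <;> omega
    · simp
  omega

lemma legCo_zero (m : ℕ) (η : Fin (m+1) → ℕ) (h : 0 < m + 1) :
    (univ.filter fun k : Fin (m+1) => ⟨0, h⟩ < k ∧ η ⟨0, h⟩ < η k).card = legCo (m+1) η 0 := by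
  simp [legCo]
  rfl

end Stmt1Aux

open Stmt1Aux

theorem stmt_1 (n : ℕ) (hn : 1 ≤ n) (η : Fin n → ℕ) :
    dP' n (Phi n η) (X 0 : MvPolynomial (Fin 2) ℤ) (X 1)
      = (1 - (X 0 : MvPolynomial (Fin 2) ℤ) ^ (η ⟨0, hn⟩ + 1)
            * (X 1) ^ (n - 1 - (univ.filter fun k : Fin n => ⟨0, hn⟩ < k ∧ η ⟨0, hn⟩ < η k).card))
        * dP' n η (X 0) (X 1) ∧
    eP' n (Phi n η) (X 0 : MvPolynomial (Fin 2) ℤ) (X 1)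
      = (1 - (X 0 : MvPolynomial (Fin 2) ℤ) ^ (η ⟨0, hn⟩ + 1)
            * (X 1) ^ (n - 1 - (univ.filter fun k : Fin n => ⟨0, hn⟩ < k ∧ η ⟨0, hn⟩ < η k).card))
        * eP' n η (X 0) (X 1) := by
  obtain ⟨m, rfl⟩ : ∃ m, n = m + 1 := ⟨n - 1, by omega⟩
  rw [legCo_zero m η hn]
  have h0 : (⟨0, hn⟩ : Fin (m+1)) = 0 := rfl
  rw [h0]
  constructor
  · unfold dP'
    rw [Fin.prod_univ_castSucc, Fin.prod_univ_succ]
    simp only [Phi_castSucc, Phi_last, leg_castSucc]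
    have key : ∀ f : ℕ → MvPolynomial (Fin 2) ℤ, ∀ N,
        ∏ j ∈ Finset.Icc 1 (N+1), f j = f 1 * ∏ j ∈ Finset.Icc 1 N, f (j+1) := by
      intro f N
      induction N with
      | zero => simp
      | succ N ih => 
        rw [Finset.prod_Icc_succ_top (by omega), ih, Finset.prod_Icc_succ_top (by omega), mul_assoc]
    rw [key]
    have h1 := leg_last m η 0
    rw [leg_zero] at h1
    rw [zero_add] at h1
    simp only [leg_last, h1, Nat.add_sub_add_right]
    simp only [Nat.add_sub_cancel]
    ring
  · unfold eP'
    rw [Fin.prod_univ_castSucc, Fin.prod_univ_succ]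
    simp only [Phi_castSucc, Phi_last, legCo_castSucc, legCo_last]
    rw [Finset.prod_Icc_succ_top (by omega)]
    simp only [Nat.add_sub_cancel]
    ring
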